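/- Define Ã(s) = −ζ'(s)/ζ(s) − 1/(s−1) for real s. Then Ã(s) < 0 for all real s with −2 < s < 1, and for every real x > 1, −∫_{−1}^{1} Ã(s)·(1−s)·x^s ds ≤ γ·x/(log x)^2 + ((c−γ)/2)·x/(log x)^3 − (c+γ)/(x·log x) − c/(x·(log x)^2) − (c−γ)/(2x·(log x)^3), where c = ζ'(−1)/ζ(−1) − 2·(d/ds)(ζ'(s)/ζ(s))|_{s=−1} and γ is the Euler–Mascheroni constant. -/

import Mathlib

open Real
open scoped ComplexOrder

/-- `Ã(s) = −ζ'(s)/ζ(s) − 1/(s−1)` for real `s`. -/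
noncomputable def Atil (s : ℝ) : ℂ :=
  -(deriv riemannZeta (s : ℂ) / riemannZeta (s : ℂ)) - 1 / ((s : ℂ) - 1)

/-- `c = ζ'(−1)/ζ(−1) − 2·(ζ'/ζ)'(−1)`. -/
noncomputable def cConst : ℂ :=
  deriv riemannZeta (-1) / riemannZeta (-1)
    - 2 * deriv (fun s : ℂ => deriv riemannZeta s / riemannZeta s) (-1)

/-!
Let `R(s) = (s - 1)ζ(s)`, an entire function; then `Ã = -R'/R`. The Euler–Maclaurin formula of
order four, continued analytically, reads
`R(s) = (s+2)(s+3)/12 - (s-1)s(s+1)(s+2)(s+3)/24 · ∫₁^∞ k(x) x^(-s-4) dx` for `Re s > -3`, with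
the small kernel `0 ≤ k(x) = ({x}(1 - {x}))² ≤ 1/16`. It determines `R`, `R'` and `R''` on `[-2, 1]`
up to small errors: `R' > 0` on `(-2, 1]` while `R(-2) = 0`, so `R > 0` there and `Ã < 0`. On
`[-1, 1]` the same estimates give the linear majorant `R'/R ≤ γ + (c - γ)/4 · (1 - s)`, with
equality at `s = 1`, and its integral against `(1 - s) x^s` is the right-hand side of the
inequality.
-/

open Set Filter Topology MeasureTheory Asymptotics

section LogMoment

/-- The logarithmic moment `∫₁^∞ (log x)ʲ k(x) x⁻ˢ dx`. -/
noncomputable def logMoment (k : ℝ → ℝ) (j : ℕ) (s : ℂ) : ℂ :=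
  ∫ x in Ioi (1 : ℝ), (x : ℂ) ^ (-s) * ((log x ^ j * k x : ℝ) : ℂ)

/-- The logarithmic moment `logMoment` at a real exponent, as a real number. -/
noncomputable def realLogMoment (k : ℝ → ℝ) (j : ℕ) (σ : ℝ) : ℝ :=
  ∫ x in Ioi (1 : ℝ), x ^ (-σ) * (log x ^ j * k x)

/-- The function `(log x)ʲ k(x)` on `(1, ∞)`, extended by zero, so that its Mellin transform at
`1 - s` is `logMoment k j s`. -/
noncomputable def logWeight (k : ℝ → ℝ) (j : ℕ) (x : ℝ) : ℂ :=
  (Ioi (1 : ℝ)).indicator (fun x => ((log x ^ j * k x : ℝ) : ℂ)) x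

variable {k : ℝ → ℝ} {C : ℝ} {j : ℕ} {s : ℂ} {σ : ℝ}

lemma log_smul_logWeight (k : ℝ → ℝ) (j : ℕ) :
    (fun x => log x • logWeight k j x) = logWeight k (j + 1) := by
  ext x
  by_cases hx : x ∈ Ioi (1 : ℝ)
  · simp only [logWeight, indicator_of_mem hx, Complex.real_smul]
    push_cast
    ring
  · simp only [logWeight, indicator_of_notMem hx, smul_zero]

lemma cpow_smul_logWeight (k : ℝ → ℝ) (j : ℕ) (s : ℂ) :
    (fun x : ℝ => (x : ℂ) ^ (1 - s - 1) • logWeight k j x) =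
      (Ioi (1 : ℝ)).indicator fun x => (x : ℂ) ^ (-s) * ((log x ^ j * k x : ℝ) : ℂ) := by
  ext x
  rw [sub_sub_cancel_left]
  by_cases hx : x ∈ Ioi (1 : ℝ)
  · simp only [logWeight, indicator_of_mem hx, smul_eq_mul]
  · simp only [logWeight, indicator_of_notMem hx, smul_zero]

lemma mellin_logWeight (k : ℝ → ℝ) (j : ℕ) (s : ℂ) :
    mellin (logWeight k j) (1 - s) = logMoment k j s := by
  rw [mellin, cpow_smul_logWeight, setIntegral_indicator measurableSet_Ioi, Ioi_inter_Ioi,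
    max_eq_right zero_le_one, logMoment]

lemma logWeight_isBigO_nhds_zero (k : ℝ → ℝ) (j : ℕ) (b : ℝ) :
    logWeight k j =O[𝓝[>] 0] (fun x : ℝ => x ^ (-b)) := by
  refine (isBigO_zero _ _).congr' ?_ .rfl
  filter_upwards [mem_nhdsWithin_of_mem_nhds (Iio_mem_nhds one_pos)] with x hx
  exact (indicator_of_notMem (notMem_Ioi.2 (mem_Iio.1 hx).le) _).symm

lemma logWeight_isBigO_atTop (hC : ∀ x, |k x| ≤ C) (j : ℕ) {ε : ℝ} (hε : 0 < ε) :
    logWeight k j =O[atTop] (fun x : ℝ => x ^ ε) := by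
  have hlog : (fun x => log x ^ j) =O[atTop] (fun x : ℝ => x ^ ε) := by
    simpa only [rpow_natCast] using (isLittleO_log_rpow_rpow_atTop (j : ℝ) hε).isBigO
  have hk : k =O[atTop] (fun _ => (1 : ℝ)) :=
    IsBigO.of_bound C (.of_forall fun x => by simpa using hC x)
  refine IsBigO.trans (.of_bound 1 (.of_forall fun x => ?_)) (by simpa using hlog.mul hk)
  rw [one_mul, ← Complex.norm_real]
  exact norm_indicator_le_norm_self _ x

lemma locallyIntegrableOn_logWeight (hk : Measurable k) (hC : ∀ x, |k x| ≤ C) (j : ℕ) :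
    LocallyIntegrableOn (logWeight k j) (Ioi 0) := by
  have hbase : LocallyIntegrable ((Ioi (1 : ℝ)).indicator fun x => (k x : ℂ)) := by
    refine (locallyIntegrable_const C).mono
      ((Complex.measurable_ofReal.comp hk).indicator measurableSet_Ioi).aestronglyMeasurable
      (.of_forall fun x => (norm_indicator_le_norm_self _ x).trans ?_)
    rw [Complex.norm_real]
    exact (hC x).trans (le_abs_self C)
  have hlog : ContinuousOn (fun x : ℝ => ((log x ^ j : ℝ) : ℂ)) (Ioi 0) :=
    Complex.continuous_ofReal.comp_continuousOn
      ((continuousOn_log.mono fun x hx => (mem_Ioi.1 hx).ne').pow j)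
  convert (hbase.locallyIntegrableOn _).continuousOn_mul hlog isOpen_Ioi.isLocallyClosed using 2
    with x
  by_cases hx : x ∈ Ioi (1 : ℝ)
  · simp only [logWeight, indicator_of_mem hx, Complex.ofReal_mul]
  · simp only [logWeight, indicator_of_notMem hx, mul_zero]

lemma integrableOn_logMoment (hk : Measurable k) (hC : ∀ x, |k x| ≤ C) (j : ℕ) (hs : 1 < s.re) :
    IntegrableOn (fun x : ℝ => (x : ℂ) ^ (-s) * ((log x ^ j * k x : ℝ) : ℂ)) (Ioi 1) := by
  have hmellin : MellinConvergent (logWeight k j) (1 - s) :=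
    mellinConvergent_of_isBigO_rpow (a := (s.re - 1) / 2 - (s.re - 1)) (b := -s.re)
      (locallyIntegrableOn_logWeight hk hC j)
      (logWeight_isBigO_atTop hC j (by linarith))
      (by simp only [Complex.sub_re, Complex.one_re]; linarith)
      (logWeight_isBigO_nhds_zero k j _) (by simp)
  rw [MellinConvergent, cpow_smul_logWeight, integrableOn_indicator_iff measurableSet_Ioi,
    Ioi_inter_Ioi, max_eq_left zero_le_one] at hmellin
  exact hmellin

lemma hasDerivAt_logMoment (hk : Measurable k) (hC : ∀ x, |k x| ≤ C) (j : ℕ) (hs : 1 < s.re) :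
    HasDerivAt (logMoment k j) (-logMoment k (j + 1) s) s := by
  have hmellin := (mellin_hasDerivAt_of_isBigO_rpow (s := 1 - s)
    (a := (s.re - 1) / 2 - (s.re - 1)) (b := -s.re) (locallyIntegrableOn_logWeight hk hC j)
    (logWeight_isBigO_atTop hC j (by linarith))
    (by simp only [Complex.sub_re, Complex.one_re]; linarith)
    (logWeight_isBigO_nhds_zero k j _) (by simp)).2
  rw [log_smul_logWeight, mellin_logWeight] at hmellin
  simpa only [mellin_logWeight, mul_neg_one] using hmellin.comp_const_sub

lemma ofReal_realLogMoment (k : ℝ → ℝ) (j : ℕ) (σ : ℝ) :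
    (realLogMoment k j σ : ℂ) = logMoment k j σ := by
  rw [realLogMoment, logMoment, ← integral_complex_ofReal]
  refine setIntegral_congr_fun measurableSet_Ioi fun x hx => ?_
  simp only [Complex.ofReal_mul, Complex.ofReal_cpow (one_pos.trans hx).le, Complex.ofReal_neg]

lemma integrableOn_realLogMoment (hk : Measurable k) (hC : ∀ x, |k x| ≤ C) (j : ℕ) (hσ : 1 < σ) :
    IntegrableOn (fun x : ℝ => x ^ (-σ) * (log x ^ j * k x)) (Ioi 1) := by
  refine IntegrableOn.congr_fun (integrableOn_logMoment (s := σ) hk hC j hσ).re (fun x hx => ?_)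
    measurableSet_Ioi
  rw [← Complex.ofReal_neg, ← Complex.ofReal_cpow (one_pos.trans hx).le, ← Complex.ofReal_mul]
  rfl

lemma hasDerivAt_realLogMoment (hk : Measurable k) (hC : ∀ x, |k x| ≤ C) (j : ℕ) (hσ : 1 < σ) :
    HasDerivAt (realLogMoment k j) (-realLogMoment k (j + 1) σ) σ := by
  simpa only [← ofReal_realLogMoment, ← Complex.ofReal_neg, Complex.ofReal_re] using
    (hasDerivAt_logMoment (s := σ) hk hC j hσ).real_of_complex

lemma realLogMoment_nonneg (hk : ∀ x, 0 ≤ k x) (j : ℕ) (σ : ℝ) : 0 ≤ realLogMoment k j σ :=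
  setIntegral_nonneg measurableSet_Ioi fun x (hx : 1 < x) =>
    mul_nonneg (rpow_nonneg (one_pos.trans hx).le _)
      (mul_nonneg (pow_nonneg (log_nonneg hx.le) j) (hk x))

lemma realLogMoment_const (C : ℝ) (j : ℕ) (hσ : 1 < σ) :
    realLogMoment (fun _ => C) j σ = C * (j.factorial / (σ - 1) ^ (j + 1)) := by
  induction j generalizing σ with
  | zero =>
    simp only [realLogMoment, pow_zero, one_mul, integral_mul_const,
      integral_Ioi_rpow_of_lt (show -σ < -1 by linarith) one_pos, one_rpow]
    rw [neg_add_eq_sub, ← neg_sub σ 1, neg_div_neg_eq]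
    simp [mul_comm]
  | succ j ih =>
    have hσ' : σ - 1 ≠ 0 := by linarith
    have hclosed : HasDerivAt (fun σ : ℝ => C * (j.factorial / (σ - 1) ^ (j + 1)))
        (-(C * ((j + 1).factorial / (σ - 1) ^ (j + 2)))) σ := by
      have hpow := ((hasDerivAt_id σ).sub_const 1).fun_pow (j + 1)
      convert! ((hpow.fun_inv (pow_ne_zero _ hσ')).const_mul (j.factorial : ℝ)).const_mul C using 1
      simp only [id, Nat.factorial_succ]
      push_cast
      field_simp
      ring
    have hmoment := hasDerivAt_realLogMoment (k := fun _ => C) (C := |C|) measurable_const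
      (fun _ => le_rfl) j hσ
    have heq : realLogMoment (fun _ => C) j =ᶠ[𝓝 σ]
        fun σ => C * (j.factorial / (σ - 1) ^ (j + 1)) :=
      (lt_mem_nhds hσ).mono fun τ hτ => ih hτ
    exact neg_injective (hmoment.unique (hclosed.congr_of_eventuallyEq heq))

lemma realLogMoment_le (hk : Measurable k) (hk0 : ∀ x, 0 ≤ k x) (hC : ∀ x, k x ≤ C) (j : ℕ)
    (hσ : 1 < σ) : realLogMoment k j σ ≤ C * (j.factorial / (σ - 1) ^ (j + 1)) := by
  rw [← realLogMoment_const C j hσ]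
  refine setIntegral_mono_on
    (integrableOn_realLogMoment hk (fun x => (abs_of_nonneg (hk0 x)).trans_le (hC x)) j hσ)
    (integrableOn_realLogMoment measurable_const (fun _ => le_rfl) j hσ) measurableSet_Ioi
    fun x (hx : 1 < x) => ?_
  have : 0 < x := one_pos.trans hx
  have : 0 ≤ log x := log_nonneg hx.le
  gcongr
  exact hC x

end LogMoment

section EulerMaclaurin

/-- The kernel `({x}(1 - {x}))² = B₄({x}) - B₄` of the fourth-order Euler–Maclaurin formula. -/
noncomputable def eulerMaclaurinKernel (x : ℝ) : ℝ :=
  (Int.fract x * (1 - Int.fract x)) ^ 2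

lemma eulerMaclaurinKernel_nonneg (x : ℝ) : 0 ≤ eulerMaclaurinKernel x := sq_nonneg _

lemma eulerMaclaurinKernel_le (x : ℝ) : eulerMaclaurinKernel x ≤ 1 / 16 := by
  have hy : 0 ≤ Int.fract x * (1 - Int.fract x) :=
    mul_nonneg (Int.fract_nonneg x) (sub_nonneg.2 (Int.fract_lt_one x).le)
  calc eulerMaclaurinKernel x ≤ (1 / 4) ^ 2 :=
        pow_le_pow_left₀ hy (by nlinarith [sq_nonneg (Int.fract x - 1 / 2)]) 2
    _ = 1 / 16 := by norm_num

lemma abs_eulerMaclaurinKernel_le (x : ℝ) : |eulerMaclaurinKernel x| ≤ 1 / 16 :=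
  (abs_of_nonneg (eulerMaclaurinKernel_nonneg x)).trans_le (eulerMaclaurinKernel_le x)

lemma measurable_eulerMaclaurinKernel : Measurable eulerMaclaurinKernel :=
  (measurable_fract.mul (measurable_fract.const_sub 1)).pow_const 2

lemma eulerMaclaurinKernel_of_mem_Icc {n : ℤ} {x : ℝ} (hx : x ∈ Icc (n : ℝ) (n + 1)) :
    eulerMaclaurinKernel x = ((x - n) * (1 - (x - n))) ^ 2 := by
  rcases hx.2.eq_or_lt with rfl | hlt
  · simp [eulerMaclaurinKernel]
  · have hfract : Int.fract x = x - n :=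
      Int.fract_eq_iff.2 ⟨sub_nonneg.2 hx.1, by linarith, n, by ring⟩
    rw [eulerMaclaurinKernel, hfract]

variable {E : Type*} [NormedAddCommGroup E] [NormedSpace ℝ E] {f : ℕ → ℝ → E} {a : ℝ} {n : ℤ}

-- Integrate by parts four times: the fourth derivative of `y² (1 - y)²` is the constant `24`.
lemma hasDerivAt_eulerMaclaurin_primitive {x : ℝ}
    (hf : ∀ i < 5, HasDerivAt (f i) (f (i + 1) x) x) :
    HasDerivAt (fun x => ((x - a) * (1 - (x - a))) ^ 2 • f 4 x
        - (2 * (x - a) - 6 * (x - a) ^ 2 + 4 * (x - a) ^ 3) • f 3 x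
        + (2 - 12 * (x - a) + 12 * (x - a) ^ 2) • f 2 x
        - (24 * (x - a) - 12) • f 1 x + (24 : ℝ) • f 0 x)
      (((x - a) * (1 - (x - a))) ^ 2 • f 5 x) x := by
  have hy : HasDerivAt (fun x => x - a) 1 x := (hasDerivAt_id x).sub_const a
  have hk₀ := (hy.fun_mul (hy.const_sub 1)).fun_pow 2
  have hk₁ := ((hy.const_mul 2).fun_sub ((hy.fun_pow 2).const_mul 6)).fun_add
    ((hy.fun_pow 3).const_mul 4)
  have hk₂ := ((hy.const_mul 12).const_sub 2).fun_add ((hy.fun_pow 2).const_mul 12)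
  have hk₃ := (hy.const_mul 24).sub_const 12
  convert! ((((hk₀.fun_smul (hf 4 (by norm_num))).fun_sub
    (hk₁.fun_smul (hf 3 (by norm_num)))).fun_add (hk₂.fun_smul (hf 2 (by norm_num)))).fun_sub
    (hk₃.fun_smul (hf 1 (by norm_num)))).fun_add ((hf 0 (by norm_num)).const_smul (24 : ℝ)) using 1
  norm_num only [Nat.cast_ofNat, Nat.add_one_sub_one]
  module

variable [CompleteSpace E]

lemma integral_eulerMaclaurinKernel_smul_add_one
    (hf : ∀ i < 5, ∀ x ∈ Icc (n : ℝ) (n + 1), HasDerivAt (f i) (f (i + 1) x) x)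
    (hf5 : ContinuousOn (f 5) (Icc (n : ℝ) (n + 1))) :
    ∫ x in (n : ℝ)..n + 1, eulerMaclaurinKernel x • f 5 x =
      (24 : ℝ) • (f 0 (n + 1) - f 0 n) - (12 : ℝ) • (f 1 n + f 1 (n + 1))
        + (2 : ℝ) • (f 2 (n + 1) - f 2 n) := by
  have huIcc : uIcc (n : ℝ) (n + 1) = Icc (n : ℝ) (n + 1) := uIcc_of_le (by linarith)
  have hpoly : EqOn (fun x => eulerMaclaurinKernel x • f 5 x)
      (fun x => ((x - n) * (1 - (x - n))) ^ 2 • f 5 x) (uIcc (n : ℝ) (n + 1)) := fun x hx => by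
    simp only [eulerMaclaurinKernel_of_mem_Icc (huIcc ▸ hx)]
  rw [intervalIntegral.integral_congr hpoly, intervalIntegral.integral_eq_sub_of_hasDerivAt
    (fun x hx => hasDerivAt_eulerMaclaurin_primitive fun i hi => hf i hi x (huIcc ▸ hx))
    (ContinuousOn.intervalIntegrable (huIcc ▸ ContinuousOn.smul (by fun_prop) hf5))]
  simp only [add_sub_cancel_left, sub_self]
  module

lemma integral_eulerMaclaurinKernel_smul (N : ℕ)
    (hf : ∀ i < 5, ∀ x ∈ Ici (n : ℝ), HasDerivAt (f i) (f (i + 1) x) x)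
    (hf5 : ContinuousOn (f 5) (Ici (n : ℝ)))
    (hint : IntegrableOn (fun x => eulerMaclaurinKernel x • f 5 x) (Ioi (n : ℝ))) :
    ∫ x in (n : ℝ)..n + N, eulerMaclaurinKernel x • f 5 x =
      (24 : ℝ) • (f 0 (n + N) - f 0 n - ∑ i ∈ Finset.range N, f 1 (n + i))
        - (12 : ℝ) • (f 1 (n + N) - f 1 n) + (2 : ℝ) • (f 2 (n + N) - f 2 n) := by
  induction N with
  | zero => simp
  | succ N ih =>
    have hmono : (n : ℝ) ≤ n + N := le_add_of_nonneg_right N.cast_nonneg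
    have hsub : Icc (n + N : ℝ) (n + N + 1) ⊆ Ici (n : ℝ) := fun x hx => hmono.trans hx.1
    have hstep := integral_eulerMaclaurinKernel_smul_add_one (n := n + N) (f := f)
    push_cast at hstep
    rw [← intervalIntegral.integral_add_adjacent_intervals (b := (n : ℝ) + N), ih,
      Nat.cast_succ, ← add_assoc, hstep (fun i hi x hx => hf i hi x (hsub hx)) (hf5.mono hsub),
      Finset.sum_range_succ]
    · module
    all_goals
      rw [intervalIntegrable_iff_integrableOn_Ioc_of_le (by push_cast; linarith)]
      exact hint.mono_set fun x hx => by simp only [mem_Ioc, mem_Ioi] at hx ⊢; linarith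

lemma integral_Ioi_eulerMaclaurinKernel_smul {S : E}
    (hf : ∀ i < 5, ∀ x ∈ Ici (n : ℝ), HasDerivAt (f i) (f (i + 1) x) x)
    (hf5 : ContinuousOn (f 5) (Ici (n : ℝ)))
    (hint : IntegrableOn (fun x => eulerMaclaurinKernel x • f 5 x) (Ioi (n : ℝ)))
    (hlim : ∀ i < 3, Tendsto (f i) atTop (𝓝 0)) (hS : HasSum (fun i : ℕ => f 1 (n + i)) S) :
    ∫ x in Ioi (n : ℝ), eulerMaclaurinKernel x • f 5 x =
      (12 : ℝ) • f 1 n - (24 : ℝ) • (f 0 n + S) - (2 : ℝ) • f 2 n := by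
  have hN : Tendsto (fun N : ℕ => (n : ℝ) + N) atTop atTop :=
    tendsto_atTop_add_const_left _ _ tendsto_natCast_atTop_atTop
  have hf0 := (hlim 0 (by norm_num)).comp hN
  have hf1 := (hlim 1 (by norm_num)).comp hN
  have hf2 := (hlim 2 (by norm_num)).comp hN
  have hright := ((((hf0.sub_const (f 0 n)).sub hS.tendsto_sum_nat).const_smul (24 : ℝ)).sub
    ((hf1.sub_const (f 1 n)).const_smul (12 : ℝ))).add ((hf2.sub_const (f 2 n)).const_smul (2 : ℝ))
  refine (tendsto_nhds_unique (intervalIntegral_tendsto_integral_Ioi _ hint hN)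
    (hright.congr fun N => (integral_eulerMaclaurinKernel_smul N hf hf5 hint).symm)).trans ?_
  module

end EulerMaclaurin

section PowerFunction

/-- The `n`-th derivative `w (w - 1) ⋯ (w - n + 1) x^(w - n)` of the power function `x ↦ x ^ w`
on the positive half-line. -/
noncomputable def cpowDeriv (w : ℂ) (n : ℕ) (x : ℝ) : ℂ :=
  (descPochhammer ℂ n).eval w * (x : ℂ) ^ (w - n)

variable {w : ℂ} {x : ℝ}

lemma hasDerivAt_cpowDeriv (w : ℂ) (n : ℕ) (hx : 0 < x) :
    HasDerivAt (cpowDeriv w n) (cpowDeriv w (n + 1) x) x := by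
  have hpow := (((hasDerivAt_id (x : ℂ)).cpow_const (c := w - n)
    (Complex.ofReal_mem_slitPlane.2 hx)).comp_ofReal).const_mul ((descPochhammer ℂ n).eval w)
  convert! hpow using 1
  simp only [cpowDeriv, descPochhammer_succ_eval, id, Nat.cast_succ, sub_add_eq_sub_sub]
  ring

lemma tendsto_cpowDeriv_atTop (hw : w.re < 0) (n : ℕ) :
    Tendsto (cpowDeriv w n) atTop (𝓝 0) := by
  have hre : 0 < n - w.re := by linarith [n.cast_nonneg (α := ℝ)]
  have hpow : Tendsto (fun x : ℝ => (x : ℂ) ^ (w - n)) atTop (𝓝 0) := by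
    rw [tendsto_zero_iff_norm_tendsto_zero]
    refine (tendsto_rpow_neg_atTop hre).congr' ?_
    filter_upwards [eventually_gt_atTop 0] with x hx
    simp [Complex.norm_cpow_eq_rpow_re_of_pos hx]
  simpa only [mul_zero, cpowDeriv] using! hpow.const_mul ((descPochhammer ℂ n).eval w)

end PowerFunction

section RiemannZeta

variable {s : ℂ}

lemma riemannZeta₁_of_ne_one (hs : s ≠ 1) : riemannZeta₁ s = (s - 1) * riemannZeta s := by
  rw [riemannZeta_eq_inv_sub_mul hs, mul_inv_cancel_left₀ (sub_ne_zero.2 hs)]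

lemma hasSum_riemannZeta (hs : 1 < s.re) :
    HasSum (fun n : ℕ => (1 + n : ℂ) ^ (-s)) (riemannZeta s) := by
  have hsummable := (summable_nat_add_iff 1).2 (Complex.summable_one_div_nat_cpow.2 hs)
  rw [zeta_eq_tsum_one_div_nat_add_one_cpow hs]
  convert! hsummable.hasSum using 2 with n
  · rw [Complex.cpow_neg, one_div, Nat.cast_succ, add_comm]
  · simp

/-- `s ↦ (s - 1)s(s + 1)(s + 2)(s + 3) / 24`, the coefficient of the remainder integral in the
fourth-order Euler–Maclaurin formula for `(s - 1)ζ(s)`. -/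
def remainderCoeff {R : Type*} [Field R] (s : R) : R :=
  (s - 1) * s * (s + 1) * (s + 2) * (s + 3) / 24

lemma eulerMaclaurinKernel_smul_cpowDeriv (s : ℂ) (x : ℝ) :
    eulerMaclaurinKernel x • cpowDeriv (1 - s) 5 x = -24 * remainderCoeff s *
      ((x : ℂ) ^ (-(s + 4)) * ((log x ^ 0 * eulerMaclaurinKernel x : ℝ) : ℂ)) := by
  simp only [cpowDeriv, descPochhammer_succ_eval, descPochhammer_zero, Polynomial.eval_one,
    remainderCoeff, Complex.real_smul, pow_zero, one_mul]
  push_cast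
  ring_nf

lemma integrableOn_eulerMaclaurinKernel_smul_cpowDeriv (hs : -3 < s.re) :
    IntegrableOn (fun x => eulerMaclaurinKernel x • cpowDeriv (1 - s) 5 x) (Ioi 1) := by
  simp only [eulerMaclaurinKernel_smul_cpowDeriv]
  exact (integrableOn_logMoment measurable_eulerMaclaurinKernel abs_eulerMaclaurinKernel_le 0
    (by simp only [Complex.add_re, Complex.re_ofNat]; linarith)).const_mul _

lemma integral_eulerMaclaurinKernel_smul_cpowDeriv (s : ℂ) :
    ∫ x in Ioi (1 : ℝ), eulerMaclaurinKernel x • cpowDeriv (1 - s) 5 x =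
      -24 * remainderCoeff s * logMoment eulerMaclaurinKernel 0 (s + 4) := by
  simp only [logMoment, eulerMaclaurinKernel_smul_cpowDeriv, integral_const_mul]

lemma riemannZeta₁_eq_of_one_lt_re (hs : 1 < s.re) :
    riemannZeta₁ s = (s + 2) * (s + 3) / 12
      - remainderCoeff s * logMoment eulerMaclaurinKernel 0 (s + 4) := by
  have hs1 : s ≠ 1 := by rintro rfl; simp at hs
  have hw : (1 - s).re < 0 := by simpa using hs
  have hsum : HasSum (fun i : ℕ => cpowDeriv (1 - s) 1 (((1 : ℤ) : ℝ) + i))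
      ((1 - s) * riemannZeta s) := by
    convert! (hasSum_riemannZeta hs).mul_left (1 - s) using 2 with i
    simp [cpowDeriv]
  have hpos : ∀ x ∈ Ici ((1 : ℤ) : ℝ), 0 < x := fun x hx =>
    one_pos.trans_le (Int.cast_one (R := ℝ) ▸ hx)
  have key := integral_Ioi_eulerMaclaurinKernel_smul (n := 1)
    (fun i _ x hx => hasDerivAt_cpowDeriv (1 - s) i (hpos x hx))
    (fun x hx => (hasDerivAt_cpowDeriv (1 - s) 5 (hpos x hx)).continuousAt.continuousWithinAt)
    (by simpa only [Int.cast_one] using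
      integrableOn_eulerMaclaurinKernel_smul_cpowDeriv (by linarith))
    (fun i _ => tendsto_cpowDeriv_atTop hw i) hsum
  rw [Int.cast_one, integral_eulerMaclaurinKernel_smul_cpowDeriv] at key
  rw [riemannZeta₁_of_ne_one hs1]
  simp only [cpowDeriv, descPochhammer_succ_eval, descPochhammer_zero, Polynomial.eval_one,
    Complex.ofReal_one, Complex.one_cpow, Complex.real_smul] at key
  push_cast at key
  linear_combination (-1 / 24) * key

lemma riemannZeta₁_eq_of_neg_three_lt_re (hs : -3 < s.re) :
    riemannZeta₁ s = (s + 2) * (s + 3) / 12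
      - remainderCoeff s * logMoment eulerMaclaurinKernel 0 (s + 4) := by
  have hopen : IsOpen {s : ℂ | -3 < s.re} := isOpen_lt continuous_const Complex.continuous_re
  have hright : DifferentiableOn ℂ (fun s => (s + 2) * (s + 3) / 12
      - remainderCoeff s * logMoment eulerMaclaurinKernel 0 (s + 4)) {s : ℂ | -3 < s.re} := by
    intro z hz
    have hre : 1 < (z + 4).re := by
      simp only [Complex.add_re, Complex.re_ofNat]
      linarith [mem_ofPred.1 hz]
    have hmoment := ((hasDerivAt_logMoment measurable_eulerMaclaurinKernel
      abs_eulerMaclaurinKernel_le 0 hre).comp_add_const z 4).differentiableAt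
    unfold remainderCoeff
    exact DifferentiableAt.differentiableWithinAt (by fun_prop)
  have hnhds : ∀ᶠ z : ℂ in 𝓝 2, riemannZeta₁ z = (z + 2) * (z + 3) / 12
      - remainderCoeff z * logMoment eulerMaclaurinKernel 0 (z + 4) := by
    filter_upwards [(isOpen_lt continuous_const Complex.continuous_re).mem_nhds
      (show (1 : ℝ) < (2 : ℂ).re by norm_num)] with z hz using riemannZeta₁_eq_of_one_lt_re hz
  have hleft := differentiable_riemannZeta₁.differentiableOn.analyticOnNhd hopen
  exact hleft.eqOn_of_preconnected_of_eventuallyEq (hright.analyticOnNhd hopen)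
    (convex_halfSpace_re_gt _).isPreconnected (show -3 < (2 : ℂ).re by norm_num) hnhds hs

lemma logDeriv_riemannZeta_eq (hs : s ≠ 1) (hζ : riemannZeta₁ s ≠ 0) :
    logDeriv riemannZeta s = logDeriv riemannZeta₁ s - 1 / (s - 1) := by
  have hs' : s - 1 ≠ 0 := sub_ne_zero.2 hs
  have heq : riemannZeta =ᶠ[𝓝 s] fun s => riemannZeta₁ s / (s - 1) := by
    filter_upwards [isOpen_ne.mem_nhds hs] with z hz
    rw [riemannZeta_eq_inv_sub_mul hz, inv_mul_eq_div]
  rw [logDeriv_apply, heq.deriv_eq, heq.eq_of_nhds, ← logDeriv_apply,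
    logDeriv_div s hζ hs' differentiable_riemannZeta₁.differentiableAt (by fun_prop),
    logDeriv_apply (fun s => s - 1)]
  simp

lemma differentiableAt_logDeriv_riemannZeta₁ (hζ : riemannZeta₁ s ≠ 0) :
    DifferentiableAt ℂ (logDeriv riemannZeta₁) s :=
  (differentiable_riemannZeta₁.deriv s).div (differentiable_riemannZeta₁ s) hζ

lemma deriv_logDeriv_riemannZeta_eq (hs : s ≠ 1) (hζ : riemannZeta₁ s ≠ 0) :
    deriv (logDeriv riemannZeta) s = deriv (logDeriv riemannZeta₁) s + 1 / (s - 1) ^ 2 := by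
  have hs' : s - 1 ≠ 0 := sub_ne_zero.2 hs
  have hnhds : ∀ᶠ z in 𝓝 s, z ≠ 1 ∧ riemannZeta₁ z ≠ 0 := (eventually_ne_nhds hs).and
    (differentiable_riemannZeta₁.continuous.continuousAt.eventually_ne hζ)
  have heq : logDeriv riemannZeta =ᶠ[𝓝 s] fun z => logDeriv riemannZeta₁ z - 1 / (z - 1) :=
    hnhds.mono fun z hz => logDeriv_riemannZeta_eq hz.1 hz.2
  have hpole : HasDerivAt (fun z : ℂ => 1 / (z - 1)) (-1 / (s - 1) ^ 2) s := by
    simpa only [one_div, id] using ((hasDerivAt_id s).sub_const 1).fun_inv hs'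
  rw [heq.deriv_eq,
    ((differentiableAt_logDeriv_riemannZeta₁ hζ).hasDerivAt.fun_sub hpole).deriv]
  ring

end RiemannZeta

section RealRestriction

lemma deriv_eq_ofReal_deriv {F : ℂ → ℂ} {f : ℝ → ℝ} {x : ℝ} (hF : DifferentiableAt ℂ F x)
    (hf : ∀ᶠ y : ℝ in 𝓝 x, F y = f y) : deriv F x = ((deriv f x : ℝ) : ℂ) := by
  have hre : HasDerivAt f (deriv F x).re x :=
    hF.hasDerivAt.real_of_complex.congr_of_eventuallyEq
      (hf.mono fun y hy => by simp [hy])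
  rw [hre.deriv]
  exact hF.hasDerivAt.comp_ofReal.unique (hre.ofReal_comp.congr_of_eventuallyEq hf)

/-- The entire function `s ↦ (s - 1)ζ(s)` restricted to the real line, as a real function. -/
noncomputable def realZeta₁ (σ : ℝ) : ℝ := (riemannZeta₁ σ).re

lemma ofReal_realZeta₁ (σ : ℝ) : (realZeta₁ σ : ℂ) = riemannZeta₁ σ := by
  rw [realZeta₁, ← Complex.conj_eq_iff_re]
  rcases eq_or_ne σ 1 with rfl | hσ
  · simp [riemannZeta₁_one]
  · rw [riemannZeta₁_of_ne_one (Complex.ofReal_eq_one.not.2 hσ), map_mul, ← riemannZeta_conj]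
    simp

lemma ofReal_deriv_realZeta₁ (σ : ℝ) : ((deriv realZeta₁ σ : ℝ) : ℂ) = deriv riemannZeta₁ σ :=
  (deriv_eq_ofReal_deriv differentiable_riemannZeta₁.differentiableAt
    (.of_forall fun y => (ofReal_realZeta₁ y).symm)).symm

lemma ofReal_logDeriv_realZeta₁ (σ : ℝ) :
    ((logDeriv realZeta₁ σ : ℝ) : ℂ) = logDeriv riemannZeta₁ σ := by
  rw [logDeriv_apply, logDeriv_apply, Complex.ofReal_div, ofReal_deriv_realZeta₁, ofReal_realZeta₁]

lemma differentiable_realZeta₁ : Differentiable ℝ realZeta₁ := fun _ =>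
  differentiable_riemannZeta₁.differentiableAt.hasDerivAt.real_of_complex.differentiableAt

lemma differentiable_deriv_realZeta₁ : Differentiable ℝ (deriv realZeta₁) := fun x => by
  have hderiv := differentiable_riemannZeta₁.deriv.differentiableAt (x := (x : ℂ))
  have := hderiv.hasDerivAt.real_of_complex.differentiableAt
  simpa only [← ofReal_deriv_realZeta₁, Complex.ofReal_re] using this

lemma deriv_realZeta₁_one : deriv realZeta₁ 1 = eulerMascheroniConstant := by
  have := ofReal_deriv_realZeta₁ 1
  rw [Complex.ofReal_one, deriv_riemannZeta₁_one] at this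
  exact_mod_cast this

/-- The moment `∫₁^∞ k(x) (log x)ʲ x^(-σ - 4) dx` of the Euler–Maclaurin kernel `k`; these moments
are the remainders in the formulas for `realZeta₁` and its derivatives. -/
noncomputable def zetaMoment (j : ℕ) (σ : ℝ) : ℝ :=
  realLogMoment eulerMaclaurinKernel j (σ + 4)

variable {σ : ℝ}

lemma hasDerivAt_zetaMoment (j : ℕ) (hσ : -3 < σ) :
    HasDerivAt (zetaMoment j) (-zetaMoment (j + 1) σ) σ :=
  (hasDerivAt_realLogMoment measurable_eulerMaclaurinKernel abs_eulerMaclaurinKernel_le j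
    (by linarith)).comp_add_const σ 4

lemma zetaMoment_nonneg (j : ℕ) (σ : ℝ) : 0 ≤ zetaMoment j σ :=
  realLogMoment_nonneg eulerMaclaurinKernel_nonneg j (σ + 4)

lemma zetaMoment_le {a : ℝ} (ha : -3 < a) (hσ : a ≤ σ) (j : ℕ) :
    zetaMoment j σ ≤ 1 / 16 * (j.factorial / (a + 3) ^ (j + 1)) := by
  have hpos : 0 < a + 3 := by linarith
  refine (realLogMoment_le measurable_eulerMaclaurinKernel eulerMaclaurinKernel_nonneg
    eulerMaclaurinKernel_le j (by linarith)).trans ?_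
  gcongr
  linarith

lemma realZeta₁_eq (hσ : -3 < σ) :
    realZeta₁ σ = (σ + 2) * (σ + 3) / 12 - remainderCoeff σ * zetaMoment 0 σ := by
  have key := riemannZeta₁_eq_of_neg_three_lt_re (s := σ) (by simpa using hσ)
  rw [← ofReal_realZeta₁, show (σ + 4 : ℂ) = ((σ + 4 : ℝ) : ℂ) by push_cast; rfl,
    ← ofReal_realLogMoment] at key
  unfold remainderCoeff at key
  exact_mod_cast key

lemma hasDerivAt_remainderCoeff (σ : ℝ) :
    HasDerivAt remainderCoeff ((5 * (σ + 1) ^ 4 - 15 * (σ + 1) ^ 2 + 4) / 24) σ := by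
  have hu := (hasDerivAt_id σ).add_const 1
  have hpoly := (((hu.fun_pow 5).fun_sub ((hu.fun_pow 3).const_mul 5)).fun_add
    (hu.const_mul 4)).div_const 24
  convert! hpoly using 1
  · ext σ
    simp only [remainderCoeff, id]
    ring
  · simp only [id]
    push_cast
    ring

lemma deriv_remainderCoeff (σ : ℝ) :
    deriv remainderCoeff σ = (5 * (σ + 1) ^ 4 - 15 * (σ + 1) ^ 2 + 4) / 24 :=
  (hasDerivAt_remainderCoeff σ).deriv

lemma hasDerivAt_deriv_remainderCoeff (σ : ℝ) :
    HasDerivAt (deriv remainderCoeff) ((10 * (σ + 1) ^ 3 - 15 * (σ + 1)) / 12) σ := by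
  rw [funext deriv_remainderCoeff]
  have hu := (hasDerivAt_id σ).add_const 1
  convert! ((((hu.fun_pow 4).const_mul 5).fun_sub ((hu.fun_pow 2).const_mul 15)).add_const
    4).div_const 24 using 1
  simp only [id]
  push_cast
  ring

lemma deriv_realZeta₁_eq (hσ : -3 < σ) :
    deriv realZeta₁ σ = (2 * σ + 5) / 12 - deriv remainderCoeff σ * zetaMoment 0 σ
      + remainderCoeff σ * zetaMoment 1 σ := by
  have hid := hasDerivAt_id σ
  have hformula := (((hid.add_const 2).fun_mul (hid.add_const 3)).div_const 12).fun_sub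
    ((hasDerivAt_remainderCoeff σ).fun_mul (hasDerivAt_zetaMoment 0 hσ))
  have heq : realZeta₁ =ᶠ[𝓝 σ] _ := (lt_mem_nhds hσ).mono fun τ hτ => realZeta₁_eq hτ
  rw [(hformula.congr_of_eventuallyEq heq).deriv, deriv_remainderCoeff]
  simp only [id]
  ring

lemma deriv_deriv_realZeta₁_eq (hσ : -3 < σ) :
    deriv (deriv realZeta₁) σ = 1 / 6
      - (10 * (σ + 1) ^ 3 - 15 * (σ + 1)) / 12 * zetaMoment 0 σ
      + 2 * deriv remainderCoeff σ * zetaMoment 1 σ - remainderCoeff σ * zetaMoment 2 σ := by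
  have hformula := (((((hasDerivAt_id σ).const_mul 2).add_const 5).div_const 12).fun_sub
    ((hasDerivAt_deriv_remainderCoeff σ).fun_mul (hasDerivAt_zetaMoment 0 hσ))).fun_add
    ((hasDerivAt_remainderCoeff σ).fun_mul (hasDerivAt_zetaMoment 1 hσ))
  have heq : deriv realZeta₁ =ᶠ[𝓝 σ] _ :=
    (lt_mem_nhds hσ).mono fun τ hτ => deriv_realZeta₁_eq hτ
  rw [(hformula.congr_of_eventuallyEq heq).deriv, deriv_remainderCoeff]
  ring

end RealRestriction

section Positivity

variable {σ : ℝ}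

lemma neg_le_remainderCoeff (hσ : -2 ≤ σ) (hσ1 : σ ≤ 1) : -(5 / 24) ≤ remainderCoeff σ := by
  have hsquare : remainderCoeff σ =
      ((σ + 1) * ((σ + 1) ^ 2 - 5 / 2) ^ 2 - 9 / 4 * (σ + 1)) / 24 := by
    rw [remainderCoeff]
    ring
  rw [hsquare]
  rcases le_total (-1) σ with h | h
  · linarith [mul_nonneg (neg_le_iff_add_nonneg.1 h) (sq_nonneg ((σ + 1) ^ 2 - 5 / 2))]
  · have hsq : (σ + 1) ^ 2 ≤ 1 := by nlinarith
    have hbound : ((σ + 1) ^ 2 - 5 / 2) ^ 2 ≤ 25 / 4 := by nlinarith [sq_nonneg (σ + 1)]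
    nlinarith

lemma deriv_remainderCoeff_le_one (hσ : -3 ≤ σ) (hσ1 : σ ≤ 1) : deriv remainderCoeff σ ≤ 1 := by
  have hsq : (σ + 1) ^ 2 ≤ 4 := by nlinarith
  have hfactor : deriv remainderCoeff σ - 1 = 5 / 24 * (((σ + 1) ^ 2 - 4) * ((σ + 1) ^ 2 + 1)) := by
    rw [deriv_remainderCoeff]
    ring
  nlinarith [mul_nonneg (sub_nonneg.2 hsq) (by positivity : 0 ≤ (σ + 1) ^ 2 + 1)]

lemma deriv_realZeta₁_pos (hσ : -2 < σ) (hσ1 : σ ≤ 1) : 0 < deriv realZeta₁ σ := by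
  have hM₀ : zetaMoment 0 σ ≤ 1 / 16 := (zetaMoment_le (by norm_num) hσ.le 0).trans (by norm_num)
  have hM₁ : zetaMoment 1 σ ≤ 1 / 16 := (zetaMoment_le (by norm_num) hσ.le 1).trans (by norm_num)
  have hterm₀ : deriv remainderCoeff σ * zetaMoment 0 σ ≤ zetaMoment 0 σ :=
    mul_le_of_le_one_left (zetaMoment_nonneg 0 σ)
      (deriv_remainderCoeff_le_one (by linarith) hσ1)
  have hterm₁ : -(5 / 24) * zetaMoment 1 σ ≤ remainderCoeff σ * zetaMoment 1 σ :=
    mul_le_mul_of_nonneg_right (neg_le_remainderCoeff hσ.le hσ1) (zetaMoment_nonneg 1 σ)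
  rw [deriv_realZeta₁_eq (by linarith)]
  linarith

lemma realZeta₁_neg_two : realZeta₁ (-2) = 0 := by
  rw [realZeta₁_eq (by norm_num), remainderCoeff]
  norm_num

lemma realZeta₁_neg_one : realZeta₁ (-1) = 1 / 6 := by
  rw [realZeta₁_eq (by norm_num), remainderCoeff]
  norm_num

lemma realZeta₁_pos (hσ : -2 < σ) (hσ1 : σ ≤ 1) : 0 < realZeta₁ σ := by
  have hmono : StrictMonoOn realZeta₁ (Icc (-2) 1) :=
    strictMonoOn_of_deriv_pos (convex_Icc _ _) differentiable_realZeta₁.continuous.continuousOn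
      fun τ hτ => by
        rw [interior_Icc] at hτ
        exact deriv_realZeta₁_pos hτ.1 hτ.2.le
  simpa only [realZeta₁_neg_two] using
    hmono (left_mem_Icc.2 (by norm_num)) ⟨hσ.le, hσ1⟩ hσ

lemma logDeriv_realZeta₁_pos (hσ : -2 < σ) (hσ1 : σ ≤ 1) : 0 < logDeriv realZeta₁ σ :=
  div_pos (deriv_realZeta₁_pos hσ hσ1) (realZeta₁_pos hσ hσ1)

lemma continuousOn_logDeriv_realZeta₁ : ContinuousOn (logDeriv realZeta₁) (Ioc (-2) 1) :=
  differentiable_deriv_realZeta₁.continuous.continuousOn.div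
    differentiable_realZeta₁.continuous.continuousOn fun _ hσ => (realZeta₁_pos hσ.1 hσ.2).ne'

end Positivity

section LinearMajorant

variable {σ m : ℝ}

lemma remainderCoeff_nonpos (hσ : 0 ≤ σ) (hσ1 : σ ≤ 1) : remainderCoeff σ ≤ 0 := by
  have hprod : 0 ≤ (1 - σ) * (σ * (σ + 1) * (σ + 2) * (σ + 3)) :=
    mul_nonneg (sub_nonneg.2 hσ1) (by positivity)
  rw [remainderCoeff]
  linarith

lemma neg_half_le_deriv_remainderCoeff (σ : ℝ) : -(1 / 2) ≤ deriv remainderCoeff σ := by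
  rw [deriv_remainderCoeff]
  nlinarith [sq_nonneg ((σ + 1) ^ 2 - 3 / 2)]

lemma deriv_deriv_realZeta₁_nonneg (hσ : 0 ≤ σ) (hσ1 : σ ≤ 1) :
    0 ≤ deriv (deriv realZeta₁) σ := by
  have hM₀ : zetaMoment 0 σ ≤ 1 / 48 := (zetaMoment_le (by norm_num) hσ 0).trans (by norm_num)
  have hM₁ : zetaMoment 1 σ ≤ 1 / 144 := (zetaMoment_le (by norm_num) hσ 1).trans (by norm_num)
  have hcoeff : (10 * (σ + 1) ^ 3 - 15 * (σ + 1)) / 12 ≤ 6 := by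
    have hcube : (σ + 1) ^ 3 ≤ 2 ^ 3 := by gcongr; linarith
    linarith
  have hterm₀ : (10 * (σ + 1) ^ 3 - 15 * (σ + 1)) / 12 * zetaMoment 0 σ ≤ 6 * zetaMoment 0 σ :=
    mul_le_mul_of_nonneg_right hcoeff (zetaMoment_nonneg 0 σ)
  have hterm₁ : -(1 / 2) * zetaMoment 1 σ ≤ deriv remainderCoeff σ * zetaMoment 1 σ :=
    mul_le_mul_of_nonneg_right (neg_half_le_deriv_remainderCoeff σ) (zetaMoment_nonneg 1 σ)
  have hterm₂ : remainderCoeff σ * zetaMoment 2 σ ≤ 0 :=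
    mul_nonpos_of_nonpos_of_nonneg (remainderCoeff_nonpos hσ hσ1) (zetaMoment_nonneg 2 σ)
  rw [deriv_deriv_realZeta₁_eq (by linarith)]
  linarith

lemma deriv_realZeta₁_le_eulerMascheroniConstant (hσ : 0 ≤ σ) (hσ1 : σ ≤ 1) :
    deriv realZeta₁ σ ≤ eulerMascheroniConstant := by
  have hmono : MonotoneOn (deriv realZeta₁) (Icc 0 1) :=
    monotoneOn_of_deriv_nonneg (convex_Icc _ _)
      differentiable_deriv_realZeta₁.continuous.continuousOn
      differentiable_deriv_realZeta₁.differentiableOn fun τ hτ => by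
        rw [interior_Icc] at hτ
        exact deriv_deriv_realZeta₁_nonneg hτ.1.le hτ.2.le
  rw [← deriv_realZeta₁_one]
  exact hmono ⟨hσ, hσ1⟩ (right_mem_Icc.2 zero_le_one) hσ1

lemma deriv_realZeta₁_le_of_nonneg (hm : eulerMascheroniConstant ≤ m) (hσ : 0 ≤ σ)
    (hσ1 : σ ≤ 1) :
    deriv realZeta₁ σ ≤ (eulerMascheroniConstant + m * (1 - σ)) * realZeta₁ σ := by
  set γ := eulerMascheroniConstant
  have hγ : 0 < γ := by linarith [one_half_lt_eulerMascheroniConstant]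
  have hlower : (σ + 2) * (σ + 3) / 12 ≤ realZeta₁ σ := by
    rw [realZeta₁_eq (by linarith)]
    linarith [mul_nonneg_of_nonpos_of_nonpos (remainderCoeff_nonpos hσ hσ1)
      (neg_nonpos.2 (zetaMoment_nonneg 0 σ))]
  calc deriv realZeta₁ σ ≤ γ := deriv_realZeta₁_le_eulerMascheroniConstant hσ hσ1
    _ ≤ (γ + m * (1 - σ)) * ((σ + 2) * (σ + 3) / 12) := by
      have hgap : 0 ≤ (1 - σ) * (γ * (σ * (σ + 4)) + (m - γ) * ((σ + 2) * (σ + 3))) := by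
        have := sub_nonneg.2 hσ1
        have := sub_nonneg.2 hm
        positivity
      linarith
    _ ≤ (γ + m * (1 - σ)) * realZeta₁ σ := by
      have : 0 ≤ 1 - σ := by linarith
      gcongr
      nlinarith

lemma remainderCoeff_mem_Icc (hσ : -1 ≤ σ) (hσ0 : σ ≤ 0) :
    remainderCoeff σ ∈ Icc (0 : ℝ) (1 / 2) := by
  have hfactor : remainderCoeff σ =
      (-σ * ((σ + 1) * (σ + 2))) * ((1 - σ) * (σ + 3)) / 24 := by
    rw [remainderCoeff]
    ring
  have hσ' : 0 ≤ -σ := by linarith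
  have hleft : 0 ≤ (σ + 1) * (σ + 2) := mul_nonneg (by linarith) (by linarith)
  have hright : 0 ≤ (1 - σ) * (σ + 3) := mul_nonneg (by linarith) (by linarith)
  have hleft' : -σ * ((σ + 1) * (σ + 2)) ≤ 1 * 2 := by gcongr <;> nlinarith
  have hright' : (1 - σ) * (σ + 3) ≤ 4 := by nlinarith [sq_nonneg (σ + 1)]
  rw [hfactor]
  constructor
  · positivity
  · nlinarith [mul_nonneg hσ' hleft]

lemma deriv_realZeta₁_le_of_nonpos (hm : 3 / 4 ≤ m) (hσ : -1 ≤ σ) (hσ0 : σ ≤ 0) :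
    deriv realZeta₁ σ ≤ (eulerMascheroniConstant + m * (1 - σ)) * realZeta₁ σ := by
  obtain ⟨hq0, hq1⟩ := remainderCoeff_mem_Icc hσ hσ0
  have hM₀ : zetaMoment 0 σ ≤ 1 / 32 := (zetaMoment_le (by norm_num) hσ 0).trans (by norm_num)
  have hM₁ : zetaMoment 1 σ ≤ 1 / 64 := (zetaMoment_le (by norm_num) hσ 1).trans (by norm_num)
  have hupper : deriv realZeta₁ σ ≤ (2 * σ + 5) / 12 + 3 / 128 := by
    rw [deriv_realZeta₁_eq (by linarith)]
    nlinarith [zetaMoment_nonneg 0 σ, zetaMoment_nonneg 1 σ, neg_half_le_deriv_remainderCoeff σ]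
  have hlower : (σ + 2) * (σ + 3) / 12 - 1 / 64 ≤ realZeta₁ σ := by
    rw [realZeta₁_eq (by linarith)]
    nlinarith [zetaMoment_nonneg 0 σ]
  have hfactor : 1 / 2 + 3 / 4 * (1 - σ) ≤ eulerMascheroniConstant + m * (1 - σ) := by
    nlinarith [one_half_lt_eulerMascheroniConstant]
  calc deriv realZeta₁ σ ≤ (2 * σ + 5) / 12 + 3 / 128 := hupper
    _ ≤ (1 / 2 + 3 / 4 * (1 - σ)) * ((σ + 2) * (σ + 3) / 12 - 1 / 64) := by
      have : 0 ≤ -σ * (σ + 1) := mul_nonneg (by linarith) (by linarith)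
      have : 0 ≤ (-σ) ^ 3 := pow_nonneg (by linarith) 3
      nlinarith
    _ ≤ (eulerMascheroniConstant + m * (1 - σ)) * realZeta₁ σ := by
      gcongr
      all_goals nlinarith

/-- The constant `c` as a real number: in `cConst`, the contributions of the pole of `ζ` to the two
terms cancel, so that `ζ` may be replaced by `(s - 1)ζ(s)`. -/
noncomputable def cReal : ℝ :=
  logDeriv realZeta₁ (-1) - 2 * deriv (logDeriv realZeta₁) (-1)

lemma cReal_eq : cReal = 6 * deriv realZeta₁ (-1) - 12 * deriv (deriv realZeta₁) (-1)
    + 72 * deriv realZeta₁ (-1) ^ 2 := by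
  have hquot := deriv_fun_div (differentiable_deriv_realZeta₁ (-1)) (differentiable_realZeta₁ (-1))
    (realZeta₁_pos (by norm_num) (by norm_num)).ne'
  have hlog : deriv (logDeriv realZeta₁) (-1) = _ := hquot
  rw [cReal, hlog, logDeriv_apply, realZeta₁_neg_one]
  ring

lemma le_cReal : 11 / 3 ≤ cReal := by
  have hM₀ : zetaMoment 0 (-1) ≤ 1 / 32 :=
    (zetaMoment_le (by norm_num) le_rfl 0).trans (by norm_num)
  have hM₁ : zetaMoment 1 (-1) ≤ 1 / 64 :=
    (zetaMoment_le (by norm_num) le_rfl 1).trans (by norm_num)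
  have hderiv : 47 / 192 ≤ deriv realZeta₁ (-1) := by
    rw [deriv_realZeta₁_eq (by norm_num), deriv_remainderCoeff, remainderCoeff]
    linarith
  have hderiv₂ : deriv (deriv realZeta₁) (-1) ≤ 33 / 192 := by
    rw [deriv_deriv_realZeta₁_eq (by norm_num), deriv_remainderCoeff, remainderCoeff]
    linarith
  rw [cReal_eq]
  nlinarith

lemma logDeriv_realZeta₁_le (hσ : -1 ≤ σ) (hσ1 : σ ≤ 1) :
    logDeriv realZeta₁ σ ≤
      eulerMascheroniConstant + (cReal - eulerMascheroniConstant) / 4 * (1 - σ) := by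
  have hm : 3 / 4 ≤ (cReal - eulerMascheroniConstant) / 4 := by
    linarith [le_cReal, eulerMascheroniConstant_lt_two_thirds]
  rw [logDeriv_apply, div_le_iff₀ (realZeta₁_pos (by linarith) hσ1)]
  rcases le_total 0 σ with h | h
  · exact deriv_realZeta₁_le_of_nonneg
      (by linarith [eulerMascheroniConstant_lt_two_thirds]) h hσ1
  · exact deriv_realZeta₁_le_of_nonpos hm hσ h

end LinearMajorant

section Conclusion

lemma cConst_eq_ofReal : cConst = (cReal : ℂ) := by
  have hne : riemannZeta₁ (-1) ≠ 0 := by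
    have := ofReal_realZeta₁ (-1)
    rw [realZeta₁_neg_one] at this
    push_cast at this
    rw [← this]
    norm_num
  have hL : DifferentiableAt ℂ (logDeriv riemannZeta₁) ((-1 : ℝ) : ℂ) := by
    simpa using differentiableAt_logDeriv_riemannZeta₁ hne
  have hderiv := deriv_eq_ofReal_deriv hL
    (.of_forall fun y => (ofReal_logDeriv_realZeta₁ y).symm)
  have hvalue := ofReal_logDeriv_realZeta₁ (-1)
  have hc : cConst = logDeriv riemannZeta (-1) - 2 * deriv (logDeriv riemannZeta) (-1) := rfl
  rw [hc, logDeriv_riemannZeta_eq (by norm_num) hne,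
    deriv_logDeriv_riemannZeta_eq (by norm_num) hne, cReal]
  push_cast at hvalue hderiv ⊢
  rw [hvalue, hderiv]
  ring

lemma Atil_eq_ofReal {σ : ℝ} (hσ : -2 < σ) (hσ1 : σ < 1) :
    Atil σ = ((-logDeriv realZeta₁ σ : ℝ) : ℂ) := by
  have hne : riemannZeta₁ σ ≠ 0 := by
    rw [← ofReal_realZeta₁, Complex.ofReal_ne_zero]
    exact (realZeta₁_pos hσ hσ1.le).ne'
  rw [Atil, ← logDeriv_apply, logDeriv_riemannZeta_eq (Complex.ofReal_eq_one.not.2 hσ1.ne) hne,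
    Complex.ofReal_neg, ofReal_logDeriv_realZeta₁]
  ring

lemma integral_linear_mul_rpow {x : ℝ} (a b : ℝ) (hx : 0 < x) (hx1 : x ≠ 1) :
    ∫ s in (-1 : ℝ)..1, (a + b * (1 - s)) * (1 - s) * x ^ s =
      a * x / log x ^ 2 + 2 * b * x / log x ^ 3 - (4 * b + 2 * a) / (x * log x)
        - (4 * b + a) / (x * log x ^ 2) - 2 * b / (x * log x ^ 3) := by
  have hL : log x ≠ 0 := log_ne_zero_of_pos_of_ne_one hx hx1
  have hprimitive (s : ℝ) : HasDerivAt
      (fun s : ℝ => ((a + b * (1 - s)) * (1 - s) / log x + (a + 2 * b * (1 - s)) / log x ^ 2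
        + 2 * b / log x ^ 3) * x ^ s) ((a + b * (1 - s)) * (1 - s) * x ^ s) s := by
    have hlin : HasDerivAt (fun s : ℝ => 1 - s) (-1) s := (hasDerivAt_id s).const_sub 1
    convert! ((((((hlin.const_mul b).const_add a).fun_mul hlin).div_const (log x)).fun_add
      (((hlin.const_mul (2 * b)).const_add a).div_const (log x ^ 2))).add_const
      (2 * b / log x ^ 3)).fun_mul ((hasDerivAt_id s).const_rpow hx) using 1
    simp only [id]
    field_simp
    ring
  have hint : IntervalIntegrable (fun s => (a + b * (1 - s)) * (1 - s) * x ^ s) volume (-1) 1 :=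
    have := continuous_const_rpow hx.ne'
    Continuous.intervalIntegrable (by fun_prop) _ _
  rw [intervalIntegral.integral_eq_sub_of_hasDerivAt (fun s _ => hprimitive s) hint, rpow_neg_one,
    rpow_one]
  field_simp
  ring

lemma integral_logDeriv_realZeta₁_le {x : ℝ} (hx : 0 < x) (hx1 : x ≠ 1) :
    ∫ s in (-1 : ℝ)..1, logDeriv realZeta₁ s * (1 - s) * x ^ s ≤
      eulerMascheroniConstant * x / log x ^ 2
        + (cReal - eulerMascheroniConstant) / 2 * x / log x ^ 3
        - (cReal + eulerMascheroniConstant) / (x * log x) - cReal / (x * log x ^ 2)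
        - (cReal - eulerMascheroniConstant) / (2 * x * log x ^ 3) := by
  have hpow := continuous_const_rpow hx.ne'
  have hL : ContinuousOn (logDeriv realZeta₁) (uIcc (-1) 1) :=
    continuousOn_logDeriv_realZeta₁.mono fun s hs => by
      rw [uIcc_of_le (by norm_num)] at hs
      exact ⟨by linarith [hs.1], hs.2⟩
  calc ∫ s in (-1 : ℝ)..1, logDeriv realZeta₁ s * (1 - s) * x ^ s
      ≤ ∫ s in (-1 : ℝ)..1, (eulerMascheroniConstant
          + (cReal - eulerMascheroniConstant) / 4 * (1 - s)) * (1 - s) * x ^ s := by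
        refine intervalIntegral.integral_mono_on (by norm_num)
          (ContinuousOn.intervalIntegrable (by fun_prop))
          (Continuous.intervalIntegrable (by fun_prop) _ _) fun s hs => ?_
        have := sub_nonneg.2 hs.2
        gcongr
        exact logDeriv_realZeta₁_le hs.1 hs.2
    _ = _ := by
        rw [integral_linear_mul_rpow _ _ hx hx1]
        ring

lemma integral_Atil_eq_ofReal (x : ℝ) :
    ∫ s in (-1 : ℝ)..1, Atil s * ((1 - s : ℝ) : ℂ) * ((x ^ s : ℝ) : ℂ) =
      ((-∫ s in (-1 : ℝ)..1, logDeriv realZeta₁ s * (1 - s) * x ^ s : ℝ) : ℂ) := by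
  rw [← intervalIntegral.integral_neg, ← intervalIntegral.integral_ofReal]
  refine intervalIntegral.integral_congr_ae ?_
  filter_upwards [Measure.ae_ne volume 1] with s hs1 hs
  rw [uIoc_of_le (by norm_num)] at hs
  rw [Atil_eq_ofReal (by linarith [hs.1]) (lt_of_le_of_ne hs.2 hs1)]
  push_cast
  ring

end Conclusion

theorem stmt_12_general :
    (∀ s : ℝ, -2 < s → s < 1 → Atil s < 0) ∧
    (∀ x : ℝ, 0 < x → x ≠ 1 →
      -(∫ s in (-1 : ℝ)..1, Atil s * ((1 - s : ℝ) : ℂ) * ((x ^ s : ℝ) : ℂ))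
        ≤ (Real.eulerMascheroniConstant : ℂ) * (x : ℂ) / ((Real.log x : ℝ) : ℂ) ^ 2
          + (cConst - (Real.eulerMascheroniConstant : ℂ)) / 2 * (x : ℂ)
              / ((Real.log x : ℝ) : ℂ) ^ 3
          - (cConst + (Real.eulerMascheroniConstant : ℂ))
              / ((x : ℂ) * ((Real.log x : ℝ) : ℂ))
          - cConst / ((x : ℂ) * ((Real.log x : ℝ) : ℂ) ^ 2)
          - (cConst - (Real.eulerMascheroniConstant : ℂ))
              / (2 * (x : ℂ) * ((Real.log x : ℝ) : ℂ) ^ 3)) := by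
  refine ⟨fun s hs hs1 => ?_, fun x hx hx1 => ?_⟩
  · rw [Atil_eq_ofReal hs hs1]
    exact_mod_cast neg_neg_of_pos (logDeriv_realZeta₁_pos hs hs1.le)
  · rw [integral_Atil_eq_ofReal, cConst_eq_ofReal, Complex.ofReal_neg, neg_neg]
    exact_mod_cast integral_logDeriv_realZeta₁_le hx hx1

theorem stmt_12 :
    (∀ s : ℝ, -2 < s → s < 1 → Atil s < 0) ∧
    (∀ x : ℝ, 1 < x →
      -(∫ s in (-1 : ℝ)..1, Atil s * ((1 - s : ℝ) : ℂ) * ((x ^ s : ℝ) : ℂ))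
        ≤ (Real.eulerMascheroniConstant : ℂ) * (x : ℂ) / ((Real.log x : ℝ) : ℂ) ^ 2
          + (cConst - (Real.eulerMascheroniConstant : ℂ)) / 2 * (x : ℂ)
              / ((Real.log x : ℝ) : ℂ) ^ 3
          - (cConst + (Real.eulerMascheroniConstant : ℂ))
              / ((x : ℂ) * ((Real.log x : ℝ) : ℂ))
          - cConst / ((x : ℂ) * ((Real.log x : ℝ) : ℂ) ^ 2)
          - (cConst - (Real.eulerMascheroniConstant : ℂ))
              / (2 * (x : ℂ) * ((Real.log x : ℝ) : ℂ) ^ 3)) :=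
  ⟨stmt_12_general.1, fun x hx => stmt_12_general.2 x (by linarith) hx.ne'⟩
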